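/- Sufficient interpolation conditions with function values: let d ≥ 1, n ≥ 0, μ > 0, L > 0, and let (x_i, f_i, g_i) for i = 0, …, n be triples in ℝ^d × ℝ × ℝ^d with the points x_i pairwise distinct. Suppose there exists a nonempty closed convex set X* ⊆ ℝ^d such that for all i: ‖g_i‖ ≤ L‖x_i − x_i^*‖, ⟨g_i, x_i − x_i^*⟩ ≥ μ‖x_i − x_i^*‖², and f_i = ((μ+L)/4)·‖x_i − x_i^*‖², where x_i^* is the orthogonal projection of x_i onto X*. Then there exists a differentiable function f : ℝ^d → ℝ in RSI⁻(μ) ∩ EB⁺(L) such that ∇f(x_i) = g_i and f(x_i) = f_i for all i. -/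

import Mathlib

noncomputable section

open RealInnerProductSpace

/-- The set of global minimizers of `f`. -/
def argminSet {d : ℕ} (f : EuclideanSpace ℝ (Fin d) → ℝ) :
    Set (EuclideanSpace ℝ (Fin d)) := {z | ∀ y, f z ≤ f y}

/-- `p` is the orthogonal projection map onto the set `X` : for each `x`, `p x` is a
nearest point to `x` in `X`. -/
def IsProjOn {d : ℕ} (p : EuclideanSpace ℝ (Fin d) → EuclideanSpace ℝ (Fin d))
    (X : Set (EuclideanSpace ℝ (Fin d))) : Prop :=
  ∀ x, p x ∈ X ∧ ∀ y ∈ X, ‖x - p x‖ ≤ ‖x - y‖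

/-- `f` is a differentiable function, whose set of global minimizers is nonempty, closed
and convex, belonging to `RSI⁻(μ) ∩ EB⁺(L)`. -/
def MemRSIEB {d : ℕ} (μ L : ℝ) (f : EuclideanSpace ℝ (Fin d) → ℝ) : Prop :=
  Differentiable ℝ f ∧ (argminSet f).Nonempty ∧ IsClosed (argminSet f) ∧
    Convex ℝ (argminSet f) ∧
    ∃ p, IsProjOn p (argminSet f) ∧
      (∀ x, μ * ‖x - p x‖ ^ 2 ≤ ⟪gradient f x, x - p x⟫) ∧
      (∀ x, ‖gradient f x‖ ≤ L * ‖x - p x‖)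

/-!
Start from `y ↦ (μ + L) / 4 * ‖y - y^*‖ ^ 2`, whose gradient at `y` is `c • v` with `v = y - y^*`
and `c = (μ + L) / 2`. It has the prescribed values, and `c • v` lies well inside the set of
gradients that the two inequalities allow at residual `v`: that set is the intersection of a
half-space and a ball, and it contains the ball of radius `(L - μ) / 2 * ‖v‖` about `c • v`. By
convexity, `t • g i + (1 - t) • c • v i` then has room `(1 - t) * (L - μ) / 2 * ‖v i‖`.

To correct the gradient at `x i`, add the linear function with gradient `g i - c • v i` vanishing
at `x i`, multiplied by a cutoff supported in a small ball; the balls are disjoint. A smooth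
cutoff would satisfy `1 - t = O(‖y - x i‖ ^ 2)`, leaving too little room for the change of
residual, which is of order `‖y - x i‖`. So the cutoff has a cusp `1 - t ≈ ‖y - x i‖ ^ (2 * β)`:
for small `β` the room dominates both this change and the contribution of the gradient of the
cutoff, which is of order `β * (1 - t)`.

Finally, the two inequalities relative to the given convex set force that set to be the set of
minimizers: the gradient vanishes on it, and `f` increases along segments leaving it orthogonally.
If `L < μ`, all the `x i` lie in the set and `f = 0` works.
-/

open Filter Topology Gradient Set

section NearestPoint

/-- `p` is a metric projection onto `X`: the analogue of `IsProjOn` in an arbitrary normed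
space. -/
def IsNearestPointMap {E : Type*} [NormedAddCommGroup E] (p : E → E) (X : Set E) : Prop :=
  ∀ x, p x ∈ X ∧ ∀ y ∈ X, ‖x - p x‖ ≤ ‖x - y‖

namespace IsNearestPointMap

section Normed

variable {E : Type*} [NormedAddCommGroup E] {X : Set E} {p : E → E}

theorem mem (hp : IsNearestPointMap p X) (x : E) : p x ∈ X := (hp x).1

theorem norm_sub_le (hp : IsNearestPointMap p X) (x : E) {y : E} (hy : y ∈ X) :
    ‖x - p x‖ ≤ ‖x - y‖ :=
  (hp x).2 y hy

theorem sub_eq_zero_iff_mem (hp : IsNearestPointMap p X) {x : E} : x - p x = 0 ↔ x ∈ X := by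
  refine ⟨fun h ↦ sub_eq_zero.1 h ▸ hp.mem x, fun hx ↦ norm_le_zero_iff.1 ?_⟩
  simpa using hp.norm_sub_le x hx

end Normed

variable {E : Type*} [NormedAddCommGroup E] [InnerProductSpace ℝ E] {X : Set E} {p : E → E}

theorem inner_le_zero (hp : IsNearestPointMap p X) (hX : Convex ℝ X) (x : E) {z : E}
    (hz : z ∈ X) : ⟪x - p x, z - p x⟫ ≤ 0 := by
  have : Nonempty X := ⟨⟨z, hz⟩⟩
  refine (norm_eq_iInf_iff_real_inner_le_zero hX (hp.mem x)).1 (le_antisymm ?_ ?_) z hz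
  · exact le_ciInf fun w ↦ hp.norm_sub_le x w.2
  · exact ciInf_le (f := fun w : X ↦ ‖x - w‖) ⟨0, by rintro _ ⟨w, rfl⟩; positivity⟩
      ⟨p x, hp.mem x⟩

theorem eq_of_forall_inner_le_zero (hp : IsNearestPointMap p X) (hX : Convex ℝ X) {x q : E}
    (hq : q ∈ X) (h : ∀ z ∈ X, ⟪x - q, z - q⟫ ≤ 0) : p x = q := by
  have hsum : ‖p x - q‖ ^ 2 = ⟪x - q, p x - q⟫ + ⟪x - p x, q - p x⟫ := by
    rw [← real_inner_self_eq_norm_sq, ← neg_sub (p x) q, inner_neg_right, ← sub_eq_add_neg,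
      ← inner_sub_left, sub_sub_sub_cancel_left]
  have hle : ‖p x - q‖ ^ 2 ≤ 0 := by
    linarith [h _ (hp.mem x), hp.inner_le_zero hX x hq]
  rwa [sq_nonpos_iff, norm_eq_zero, sub_eq_zero] at hle

theorem map_add_smul_sub (hp : IsNearestPointMap p X) (hX : Convex ℝ X) (x : E) {s : ℝ}
    (hs : 0 ≤ s) : p (p x + s • (x - p x)) = p x := by
  refine hp.eq_of_forall_inner_le_zero hX (hp.mem x) fun z hz ↦ ?_
  rw [add_sub_cancel_left, real_inner_smul_left]
  exact mul_nonpos_of_nonneg_of_nonpos hs (hp.inner_le_zero hX x hz)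

theorem norm_sub_sub_sq_le_inner (hp : IsNearestPointMap p X) (hX : Convex ℝ X) (x y : E) :
    ‖(x - p x) - (y - p y)‖ ^ 2 ≤ ⟪(x - p x) - (y - p y), x - y⟫ := by
  have hx := hp.inner_le_zero hX x (hp.mem y)
  have hy := hp.inner_le_zero hX y (hp.mem x)
  have hsplit : x - y = ((x - p x) - (y - p y)) + (p x - p y) := by abel
  have hflip : ⟪x - p x, p x - p y⟫ = -⟪x - p x, p y - p x⟫ := by
    rw [← inner_neg_right, neg_sub]
  rw [hsplit, inner_add_right, real_inner_self_eq_norm_sq, inner_sub_left _ _ (p x - p y), hflip]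
  linarith

theorem norm_sub_sub_le (hp : IsNearestPointMap p X) (hX : Convex ℝ X) (x y : E) :
    ‖(x - p x) - (y - p y)‖ ≤ ‖x - y‖ := by
  have hsq := (hp.norm_sub_sub_sq_le_inner hX x y).trans (real_inner_le_norm _ _)
  rcases (norm_nonneg ((x - p x) - (y - p y))).eq_or_lt with h | h
  · exact h ▸ norm_nonneg _
  · exact le_of_mul_le_mul_left (by rwa [← sq]) h

theorem isClosed (hp : IsNearestPointMap p X) (hX : Convex ℝ X) : IsClosed X := by
  have hlip : LipschitzWith 1 fun x ↦ x - p x :=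
    LipschitzWith.of_dist_le_mul fun x y ↦ by
      simpa [dist_eq_norm] using hp.norm_sub_sub_le hX x y
  have hpre : X = (fun x ↦ x - p x) ⁻¹' {0} := by
    ext x
    exact hp.sub_eq_zero_iff_mem.symm
  exact hpre ▸ isClosed_singleton.preimage hlip.continuous

theorem hasGradientAt_norm_sub_sq [CompleteSpace E] (hp : IsNearestPointMap p X)
    (hX : Convex ℝ X) (x : E) :
    HasGradientAt (fun x ↦ ‖x - p x‖ ^ 2) ((2 : ℝ) • (x - p x)) x := by
  rw [hasGradientAt_iff_isLittleO]
  refine (Asymptotics.IsBigO.of_norm_le (g := fun y ↦ ‖y - x‖ ^ 2) fun y ↦ ?_).trans_isLittleO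
    (Asymptotics.isLittleO_pow_sub_sub x one_lt_two)
  rw [Real.norm_eq_abs, abs_le, real_inner_smul_left]
  constructor
  · have hnear : ‖x - p x‖ ^ 2 ≤ ‖(y - p y) - (y - x)‖ ^ 2 := by
      gcongr
      simpa using hp.norm_sub_le x (hp.mem y)
    have hfirm := hp.norm_sub_sub_sq_le_inner hX y x
    rw [norm_sub_sq_real (y - p y)] at hnear
    rw [inner_sub_left] at hfirm
    linarith [sq_nonneg ‖y - p y - (x - p x)‖]
  · have hnear : ‖y - p y‖ ^ 2 ≤ ‖(x - p x) + (y - x)‖ ^ 2 := by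
      gcongr
      simpa [add_comm] using hp.norm_sub_le y (hp.mem x)
    rw [norm_add_sq_real] at hnear
    linarith

end IsNearestPointMap

end NearestPoint

section Gradient

variable {E : Type*} [NormedAddCommGroup E] [InnerProductSpace ℝ E] [CompleteSpace E]

theorem hasGradientAt_add {f₁ f₂ : E → ℝ} {g₁ g₂ x : E} (h₁ : HasGradientAt f₁ g₁ x)
    (h₂ : HasGradientAt f₂ g₂ x) : HasGradientAt (fun y ↦ f₁ y + f₂ y) (g₁ + g₂) x := by
  rw [hasGradientAt_iff_hasFDerivAt, map_add]
  exact h₁.hasFDerivAt.add h₂.hasFDerivAt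

theorem hasGradientAt_const_mul {f : E → ℝ} {g x : E} (c : ℝ) (h : HasGradientAt f g x) :
    HasGradientAt (fun y ↦ c * f y) (c • g) x := by
  rw [hasGradientAt_iff_hasFDerivAt, map_smul]
  exact h.hasFDerivAt.const_mul c

theorem gradient_fun_sum {ι : Type*} {s : Finset ι} {h : ι → E → ℝ} {x : E}
    (hd : ∀ i ∈ s, DifferentiableAt ℝ (h i) x) :
    ∇ (fun y ↦ ∑ i ∈ s, h i y) x = ∑ i ∈ s, ∇ (h i) x := by
  simp only [gradient, fderiv_fun_sum hd, map_sum]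

theorem eq_of_convex_of_gradient_eq_zero {X : Set E} (hX : Convex ℝ X) {f : E → ℝ}
    (hf : Differentiable ℝ f) (h : ∀ x ∈ X, ∇ f x = 0) {x y : E} (hx : x ∈ X) (hy : y ∈ X) :
    f x = f y := by
  have hbound : ‖f y - f x‖ ≤ 0 * ‖y - x‖ :=
    hX.norm_image_sub_le_of_norm_fderiv_le (𝕜 := ℝ) (fun z _ ↦ hf z)
      (fun z hz ↦ by rw [← toDual_gradient, h z hz, map_zero, norm_zero]) hx hy
  rw [zero_mul, norm_le_zero_iff, sub_eq_zero] at hbound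
  exact hbound.symm

end Gradient

section Class

variable {E : Type*} [NormedAddCommGroup E] [InnerProductSpace ℝ E]

/-- The set of global minimizers of `f`: the analogue of `argminSet` on an arbitrary domain. -/
def globalMinimizers {α : Type*} (f : α → ℝ) : Set α := {z | ∀ y, f z ≤ f y}

/-- The class `RSI⁻(μ) ∩ EB⁺(L)`: the analogue of `MemRSIEB` in a real Hilbert space. -/
def InRSIEB [CompleteSpace E] (μ L : ℝ) (f : E → ℝ) : Prop :=
  Differentiable ℝ f ∧ (globalMinimizers f).Nonempty ∧ IsClosed (globalMinimizers f) ∧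
    Convex ℝ (globalMinimizers f) ∧
    ∃ p, IsNearestPointMap p (globalMinimizers f) ∧
      (∀ x, μ * ‖x - p x‖ ^ 2 ≤ ⟪∇ f x, x - p x⟫) ∧
      (∀ x, ‖∇ f x‖ ≤ L * ‖x - p x‖)

/-- The gradients `g` allowed by `RSI⁻(μ) ∩ EB⁺(L)` at a point with residual `v = x - x^*`, with
room to spare: every point of the closed ball of radius `ε` about `g` is still allowed. -/
structure AdmissibleGradient (μ L ε : ℝ) (v g : E) : Prop where
  norm_add_margin_le : ‖g‖ + ε ≤ L * ‖v‖
  add_margin_le_inner : μ * ‖v‖ ^ 2 + ε * ‖v‖ ≤ ⟪g, v⟫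

namespace AdmissibleGradient

variable {μ L ε ε₁ ε₂ : ℝ} {v v₀ g g₁ g₂ : E}

theorem zero_iff : AdmissibleGradient μ L 0 v g ↔
    ‖g‖ ≤ L * ‖v‖ ∧ μ * ‖v‖ ^ 2 ≤ ⟪g, v⟫ := by
  refine ⟨fun h ↦ ⟨?_, ?_⟩, fun h ↦ ⟨?_, ?_⟩⟩
  · simpa using h.norm_add_margin_le
  · simpa using h.add_margin_le_inner
  · simpa using h.1
  · simpa using h.2

theorem mono (h : AdmissibleGradient μ L ε₂ v g) (hε : ε₁ ≤ ε₂) :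
    AdmissibleGradient μ L ε₁ v g where
  norm_add_margin_le := by linarith [h.norm_add_margin_le]
  add_margin_le_inner := h.add_margin_le_inner.trans' (by gcongr)

theorem eq_zero_of_residual_eq_zero (h : AdmissibleGradient μ L 0 0 g) : g = 0 := by
  simpa using h.norm_add_margin_le

theorem residual_eq_zero_of_lt (h : AdmissibleGradient μ L 0 v g) (hLμ : L < μ) : v = 0 := by
  obtain ⟨hnorm, hinner⟩ := zero_iff.1 h
  by_contra hv
  have hle : μ * ‖v‖ ^ 2 ≤ L * ‖v‖ ^ 2 :=
    calc μ * ‖v‖ ^ 2 ≤ ‖g‖ * ‖v‖ := hinner.trans (real_inner_le_norm _ _)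
      _ ≤ L * ‖v‖ * ‖v‖ := by gcongr
      _ = L * ‖v‖ ^ 2 := by ring
  exact hLμ.not_ge (le_of_mul_le_mul_right hle (by positivity))

theorem center (hμL : 0 ≤ μ + L) (v : E) :
    AdmissibleGradient μ L ((L - μ) / 2 * ‖v‖) v (((μ + L) / 2) • v) where
  norm_add_margin_le := by
    rw [norm_smul, Real.norm_of_nonneg (by positivity)]
    linarith
  add_margin_le_inner := by
    rw [real_inner_smul_left, real_inner_self_eq_norm_sq]
    exact le_of_eq (by ring)

theorem center_of_le (hμ : 0 ≤ μ) (hμL : μ ≤ L) (v : E) :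
    AdmissibleGradient μ L 0 v (((μ + L) / 2) • v) :=
  (center (by linarith) v).mono (mul_nonneg (by linarith) (norm_nonneg v))

theorem smul_add_smul (h₁ : AdmissibleGradient μ L ε₁ v g₁) (h₂ : AdmissibleGradient μ L ε₂ v g₂)
    {a b : ℝ} (ha : 0 ≤ a) (hb : 0 ≤ b) (hab : a + b = 1) :
    AdmissibleGradient μ L (a * ε₁ + b * ε₂) v (a • g₁ + b • g₂) where
  norm_add_margin_le :=
    calc ‖a • g₁ + b • g₂‖ + (a * ε₁ + b * ε₂)
        ≤ ‖a • g₁‖ + ‖b • g₂‖ + (a * ε₁ + b * ε₂) := by gcongr; exact norm_add_le _ _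
      _ = a * (‖g₁‖ + ε₁) + b * (‖g₂‖ + ε₂) := by
        rw [norm_smul, norm_smul, Real.norm_of_nonneg ha, Real.norm_of_nonneg hb]
        ring
      _ ≤ a * (L * ‖v‖) + b * (L * ‖v‖) := by
        gcongr
        exacts [h₁.norm_add_margin_le, h₂.norm_add_margin_le]
      _ = L * ‖v‖ := by rw [← add_mul, hab, one_mul]
  add_margin_le_inner :=
    calc μ * ‖v‖ ^ 2 + (a * ε₁ + b * ε₂) * ‖v‖
        = a * (μ * ‖v‖ ^ 2 + ε₁ * ‖v‖) + b * (μ * ‖v‖ ^ 2 + ε₂ * ‖v‖) := by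
          linear_combination -(μ * ‖v‖ ^ 2) * hab
      _ ≤ a * ⟪g₁, v⟫ + b * ⟪g₂, v⟫ := by
        gcongr
        exacts [h₁.add_margin_le_inner, h₂.add_margin_le_inner]
      _ = ⟪a • g₁ + b • g₂, v⟫ := by
        rw [inner_add_left, real_inner_smul_left, real_inner_smul_left]

theorem add_perturbation (h : AdmissibleGradient μ L ε v g) (δ : E) :
    AdmissibleGradient μ L (ε - ‖δ‖) v (g + δ) where
  norm_add_margin_le := by linarith [norm_add_le g δ, h.norm_add_margin_le]
  add_margin_le_inner := by
    have hδ : -(‖δ‖ * ‖v‖) ≤ ⟪δ, v⟫ := neg_le_of_abs_le (abs_real_inner_le_norm δ v)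
    rw [inner_add_left]
    linarith [h.add_margin_le_inner]

theorem change_residual (h : AdmissibleGradient μ L ε v₀ g) (hμ : 0 ≤ μ) (hL : 0 < L)
    (hv : (L + 3 * μ) * ‖v - v₀‖ ≤ ε) : AdmissibleGradient μ L 0 v g := by
  obtain ⟨w, rfl⟩ : ∃ w, v = v₀ + w := ⟨v - v₀, by abel⟩
  rw [add_sub_cancel_left] at hv
  have hμw : 0 ≤ μ * ‖w‖ := by positivity
  have hgL : ‖g‖ ≤ L * ‖v₀‖ - L * ‖w‖ := by linarith [h.norm_add_margin_le]
  have hw : ‖w‖ ≤ ‖v₀‖ :=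
    le_of_mul_le_mul_left (by linarith [norm_nonneg g]) hL
  refine zero_iff.2 ⟨hgL.trans ?_, ?_⟩
  · rw [← mul_sub]
    gcongr
    simpa using norm_sub_norm_le v₀ (-w)
  · have hgw : -(L * ‖v₀‖ * ‖w‖) ≤ ⟪g, w⟫ := by
      refine neg_le_of_abs_le ((abs_real_inner_le_norm g w).trans ?_)
      gcongr
      linarith [mul_nonneg hL.le (norm_nonneg w)]
    have hcross : μ * ‖w‖ * ‖w‖ ≤ μ * ‖w‖ * ‖v₀‖ := by gcongr
    have hslack : (L + 3 * μ) * ‖w‖ * ‖v₀‖ ≤ ε * ‖v₀‖ := by gcongr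
    calc μ * ‖v₀ + w‖ ^ 2 ≤ μ * (‖v₀‖ + ‖w‖) ^ 2 := by gcongr; exact norm_add_le _ _
      _ ≤ ⟪g, v₀⟫ + ⟪g, w⟫ := by linarith [h.add_margin_le_inner]
      _ = ⟪g, v₀ + w⟫ := (inner_add_right _ _ _).symm

theorem norm_sub_center_sq_le (h : AdmissibleGradient μ L 0 v g) (hμL : 0 ≤ μ + L) :
    ‖g - ((μ + L) / 2) • v‖ ^ 2 ≤ (L - μ) * (5 * L + 3 * μ) / 4 * ‖v‖ ^ 2 := by
  obtain ⟨hnorm, hinner⟩ := zero_iff.1 h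
  have hsq : ‖g‖ ^ 2 ≤ (L * ‖v‖) ^ 2 := by gcongr
  have hmul := mul_le_mul_of_nonneg_left hinner hμL
  rw [norm_sub_sq_real, real_inner_smul_right, norm_smul, Real.norm_of_nonneg (by positivity)]
  linarith

theorem center_margin_pos (h : AdmissibleGradient μ L 0 v g) (hμ : 0 ≤ μ) (hL : 0 ≤ L)
    (hg : g ≠ ((μ + L) / 2) • v) : 0 < (L - μ) / 2 * ‖v‖ := by
  have hpos : 0 < ‖g - ((μ + L) / 2) • v‖ := norm_pos_iff.2 (sub_ne_zero.2 hg)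
  have hprod : 0 < (L - μ) / 2 * ‖v‖ * ((5 * L + 3 * μ) / 2 * ‖v‖) :=
    calc 0 < ‖g - ((μ + L) / 2) • v‖ ^ 2 := by positivity
      _ ≤ (L - μ) * (5 * L + 3 * μ) / 4 * ‖v‖ ^ 2 := h.norm_sub_center_sq_le (by positivity)
      _ = (L - μ) / 2 * ‖v‖ * ((5 * L + 3 * μ) / 2 * ‖v‖) := by ring
  exact pos_of_mul_pos_left hprod (by positivity)

end AdmissibleGradient

end Class

section Minimizers

variable {E : Type*} [NormedAddCommGroup E] [InnerProductSpace ℝ E] [CompleteSpace E]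
  {μ L : ℝ} {X : Set E} {p : E → E} {f : E → ℝ}

/- Moving from `p x` to `x` does not change the nearest point, so along this segment RSI makes
the derivative of `f` positive. -/
theorem IsNearestPointMap.apply_lt_of_rsi (hp : IsNearestPointMap p X) (hX : Convex ℝ X)
    (hμ : 0 < μ) (hf : Differentiable ℝ f)
    (hrsi : ∀ x, μ * ‖x - p x‖ ^ 2 ≤ ⟪∇ f x, x - p x⟫) {x : E} (hx : x ∉ X) :
    f (p x) < f x := by
  set u := x - p x
  have hu : 0 < ‖u‖ := norm_pos_iff.2 (hp.sub_eq_zero_iff_mem.not.2 hx)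
  have hderiv (s : ℝ) : HasDerivAt (fun s : ℝ ↦ f (p x + s • u)) ⟪∇ f (p x + s • u), u⟫ s := by
    have hline : HasDerivAt (fun s : ℝ ↦ p x + s • u) u s := by
      simpa using ((hasDerivAt_id s).smul_const u).const_add (p x)
    have hcomp := (hf (p x + s • u)).hasFDerivAt.comp_hasDerivAt s hline
    rwa [← inner_gradient_left] at hcomp
  have hpos {s : ℝ} (hs : 0 < s) : 0 < ⟪∇ f (p x + s • u), u⟫ := by
    have h := hrsi (p x + s • u)
    rw [hp.map_add_smul_sub hX x hs.le, add_sub_cancel_left, real_inner_smul_right] at h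
    have hsu : 0 < ‖s • u‖ := norm_pos_iff.2 (smul_ne_zero hs.ne' (norm_pos_iff.1 hu))
    exact pos_of_mul_pos_right (lt_of_lt_of_le (by positivity) h) hs.le
  have hmono : StrictMonoOn (fun s : ℝ ↦ f (p x + s • u)) (Icc 0 1) := by
    refine strictMonoOn_of_deriv_pos (convex_Icc 0 1)
      (fun s _ ↦ (hderiv s).continuousAt.continuousWithinAt) fun s hs ↦ ?_
    rw [interior_Icc] at hs
    exact (hderiv s).deriv ▸ hpos hs.1
  simpa [u] using hmono (left_mem_Icc.2 zero_le_one) (right_mem_Icc.2 zero_le_one) zero_lt_one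

theorem IsNearestPointMap.globalMinimizers_eq (hp : IsNearestPointMap p X) (hX : Convex ℝ X)
    (hμ : 0 < μ) (hf : Differentiable ℝ f)
    (hadm : ∀ x, AdmissibleGradient μ L 0 (x - p x) (∇ f x)) : globalMinimizers f = X := by
  have hlt {x : E} (hx : x ∉ X) : f (p x) < f x :=
    hp.apply_lt_of_rsi hX hμ hf (fun y ↦ (AdmissibleGradient.zero_iff.1 (hadm y)).2) hx
  have hconst {x y : E} (hx : x ∈ X) (hy : y ∈ X) : f x = f y := by
    refine eq_of_convex_of_gradient_eq_zero hX hf (fun z hz ↦ ?_) hx hy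
    have hz' := hadm z
    rw [hp.sub_eq_zero_iff_mem.2 hz] at hz'
    exact hz'.eq_zero_of_residual_eq_zero
  ext x
  refine ⟨fun hx ↦ by_contra fun hxX ↦ (hlt hxX).not_ge (hx (p x)), fun hx y ↦ ?_⟩
  by_cases hy : y ∈ X
  · exact (hconst hx hy).le
  · exact (hconst hx (hp.mem y)).trans_le (hlt hy).le

theorem IsNearestPointMap.inRSIEB (hp : IsNearestPointMap p X) (hX : Convex ℝ X)
    (hμ : 0 < μ) (hf : Differentiable ℝ f)
    (hadm : ∀ x, AdmissibleGradient μ L 0 (x - p x) (∇ f x)) : InRSIEB μ L f := by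
  rw [InRSIEB, hp.globalMinimizers_eq hX hμ hf hadm]
  exact ⟨hf, ⟨p 0, hp.mem 0⟩, hp.isClosed hX, hX, p, hp,
    fun x ↦ (AdmissibleGradient.zero_iff.1 (hadm x)).2,
    fun x ↦ (AdmissibleGradient.zero_iff.1 (hadm x)).1⟩

theorem inRSIEB_zero (μ L : ℝ) : InRSIEB μ L fun _ : E ↦ 0 := by
  have hmin : globalMinimizers (fun _ : E ↦ (0 : ℝ)) = univ := by
    ext
    simp [globalMinimizers]
  rw [InRSIEB, hmin]
  exact ⟨differentiable_const 0, univ_nonempty, isClosed_univ, convex_univ, id,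
    fun x ↦ ⟨mem_univ x, by simp⟩, by simp, by simp⟩

end Minimizers

section CuspCutoff

theorem isNearestPointMap_min_zero : IsNearestPointMap (fun t : ℝ ↦ min t 0) (Iic 0) := by
  refine fun t ↦ ⟨min_le_right t 0, fun y hy ↦ ?_⟩
  rcases le_total t 0 with ht | ht
  · simp [ht]
  · simpa [ht, abs_of_nonneg] using (le_sub_self_iff t).2 hy |>.trans (le_abs_self _)

theorem hasDerivAt_max_zero_sq (t : ℝ) :
    HasDerivAt (fun t : ℝ ↦ max t 0 ^ 2) (2 * max t 0) t := by
  have hres (t : ℝ) : t - min t 0 = max t 0 := by linarith [min_add_max t 0]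
  simpa [hres] using
    (isNearestPointMap_min_zero.hasGradientAt_norm_sub_sq (convex_Iic 0) t).hasDerivAt'

/-- The radial profile of the corrections, as a function of the squared distance: it equals `1`
at `0`, vanishes on `[1, ∞)`, and has a cusp of order `s ^ β` at `0`. -/
def cuspCutoff (β s : ℝ) : ℝ := max (1 - s ^ β) 0 ^ 2

variable {β s : ℝ}

theorem continuous_cuspCutoff (hβ : 0 ≤ β) : Continuous (cuspCutoff β) := by
  have : Continuous fun s : ℝ ↦ s ^ β := Real.continuous_rpow_const hβ
  unfold cuspCutoff
  fun_prop

theorem cuspCutoff_zero (hβ : β ≠ 0) : cuspCutoff β 0 = 1 := by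
  simp [cuspCutoff, Real.zero_rpow hβ]

theorem cuspCutoff_eq_zero (hβ : 0 ≤ β) (hs : 1 ≤ s) : cuspCutoff β s = 0 := by
  have : 1 - s ^ β ≤ 0 := sub_nonpos.2 (Real.one_le_rpow hs hβ)
  simp [cuspCutoff, max_eq_right this]

theorem cuspCutoff_nonneg (β s : ℝ) : 0 ≤ cuspCutoff β s := sq_nonneg _

theorem rpow_le_one_sub_cuspCutoff (hβ : 0 ≤ β) (hs : 0 ≤ s) (hs₁ : s ≤ 1) :
    s ^ β ≤ 1 - cuspCutoff β s := by
  have hpow : s ^ β ≤ 1 := Real.rpow_le_one hs hs₁ hβ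
  have hmul : 0 ≤ s ^ β * (1 - s ^ β) :=
    mul_nonneg (Real.rpow_nonneg hs β) (sub_nonneg.2 hpow)
  rw [cuspCutoff, max_eq_left (sub_nonneg.2 hpow)]
  linarith

theorem hasDerivAt_cuspCutoff (β : ℝ) (hs : 0 < s) :
    HasDerivAt (cuspCutoff β) (2 * max (1 - s ^ β) 0 * -(β * s ^ (β - 1))) s :=
  (hasDerivAt_max_zero_sq _).comp s ((Real.hasDerivAt_rpow_const (Or.inl hs.ne')).const_sub 1)

theorem deriv_cuspCutoff_eq_zero (hβ : 0 ≤ β) (hs : 1 ≤ s) : deriv (cuspCutoff β) s = 0 := by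
  have : 1 - s ^ β ≤ 0 := sub_nonpos.2 (Real.one_le_rpow hs hβ)
  rw [(hasDerivAt_cuspCutoff β (by linarith)).deriv, max_eq_right this, mul_zero, zero_mul]

theorem mul_abs_deriv_cuspCutoff_le (hβ : 0 ≤ β) (hs : 0 ≤ s) :
    s * |deriv (cuspCutoff β) s| ≤ 2 * β * s ^ β := by
  have hpow : 0 ≤ s ^ β := Real.rpow_nonneg hs β
  rcases hs.eq_or_lt with rfl | hs
  · rw [zero_mul]
    positivity
  have hmax : max (1 - s ^ β) 0 ≤ 1 := max_le (by linarith) zero_le_one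
  rw [(hasDerivAt_cuspCutoff β hs).deriv, abs_mul, abs_neg, abs_of_nonneg (by positivity),
    abs_of_nonneg (by positivity), Real.rpow_sub_one hs.ne']
  calc s * (2 * max (1 - s ^ β) 0 * (β * (s ^ β / s)))
      = 2 * β * s ^ β * max (1 - s ^ β) 0 := by field_simp
    _ ≤ 2 * β * s ^ β := mul_le_of_le_one_right (by positivity) hmax

end CuspCutoff

section CuspBump

section Seminormed

variable {E : Type*} [SeminormedAddCommGroup E] {x x₀ : E} {β ρ : ℝ}

theorem one_le_norm_sub_sq_div_sq (hρ : 0 < ρ) (hx : x ∉ Metric.ball x₀ ρ) :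
    1 ≤ ‖x - x₀‖ ^ 2 / ρ ^ 2 := by
  rw [mem_ball_iff_norm, not_lt] at hx
  rw [one_le_div (by positivity)]
  gcongr

theorem norm_sub_sq_div_sq_le_one (hρ : 0 < ρ) (hx : x ∈ Metric.ball x₀ ρ) :
    ‖x - x₀‖ ^ 2 / ρ ^ 2 ≤ 1 := by
  rw [mem_ball_iff_norm] at hx
  rw [div_le_one (by positivity)]
  gcongr

theorem norm_sub_le_mul_rpow (hβ : 0 ≤ β) (hβ' : β ≤ 1 / 2) (hρ : 0 < ρ)
    (hx : x ∈ Metric.ball x₀ ρ) : ‖x - x₀‖ ≤ ρ * (‖x - x₀‖ ^ 2 / ρ ^ 2) ^ β :=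
  calc ‖x - x₀‖ = ρ * (‖x - x₀‖ ^ 2 / ρ ^ 2) ^ (1 / 2 : ℝ) := by
        rw [← Real.sqrt_eq_rpow, ← div_pow, Real.sqrt_sq (by positivity),
          mul_div_cancel₀ _ hρ.ne']
    _ ≤ ρ * (‖x - x₀‖ ^ 2 / ρ ^ 2) ^ β := by
        gcongr ρ * ?_
        exact Real.rpow_le_rpow_of_exponent_ge' (by positivity)
          (norm_sub_sq_div_sq_le_one hρ hx) hβ hβ'

end Seminormed

variable {E : Type*} [NormedAddCommGroup E] [InnerProductSpace ℝ E] {e x₀ x : E} {β ρ : ℝ}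

/-- The linear function with gradient `e` vanishing at `x₀`, cut off outside the ball of radius
`ρ` about `x₀`. -/
def cuspBump (e x₀ : E) (β ρ : ℝ) (x : E) : ℝ :=
  ⟪e, x - x₀⟫ * cuspCutoff β (‖x - x₀‖ ^ 2 / ρ ^ 2)

theorem cuspBump_self (e x₀ : E) (β ρ : ℝ) : cuspBump e x₀ β ρ x₀ = 0 := by
  simp [cuspBump]

theorem cuspBump_eq_zero (hβ : 0 ≤ β) (hρ : 0 < ρ) (hx : x ∉ Metric.ball x₀ ρ) :
    cuspBump e x₀ β ρ x = 0 := by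
  rw [cuspBump, cuspCutoff_eq_zero hβ (one_le_norm_sub_sq_div_sq hρ hx), mul_zero]

theorem norm_smul_deriv_cuspCutoff_le (e x₀ x : E) (hβ : 0 ≤ β) (ρ : ℝ) :
    ‖(2 / ρ ^ 2 * ⟪e, x - x₀⟫ * deriv (cuspCutoff β) (‖x - x₀‖ ^ 2 / ρ ^ 2)) • (x - x₀)‖
      ≤ 4 * β * ‖e‖ * (‖x - x₀‖ ^ 2 / ρ ^ 2) ^ β := by
  set s := ‖x - x₀‖ ^ 2 / ρ ^ 2 with hs
  rw [norm_smul, norm_mul, norm_mul, Real.norm_of_nonneg (by positivity : 0 ≤ 2 / ρ ^ 2)]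
  calc 2 / ρ ^ 2 * ‖⟪e, x - x₀⟫‖ * ‖deriv (cuspCutoff β) s‖ * ‖x - x₀‖
      ≤ 2 / ρ ^ 2 * (‖e‖ * ‖x - x₀‖) * ‖deriv (cuspCutoff β) s‖ * ‖x - x₀‖ := by
        gcongr
        exact norm_inner_le_norm _ _
    _ = 2 * ‖e‖ * (s * |deriv (cuspCutoff β) s|) := by
        rw [Real.norm_eq_abs, hs]
        ring
    _ ≤ 2 * ‖e‖ * (2 * β * s ^ β) := by
        gcongr 2 * ‖e‖ * ?_
        exact mul_abs_deriv_cuspCutoff_le hβ (by positivity)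
    _ = 4 * β * ‖e‖ * s ^ β := by ring

variable [CompleteSpace E]

theorem hasGradientAt_cuspBump_self (e x₀ : E) (hβ : 0 < β) (ρ : ℝ) :
    HasGradientAt (cuspBump e x₀ β ρ) e x₀ := by
  rw [hasGradientAt_iff_isLittleO]
  have hlin : (fun y ↦ ⟪e, y - x₀⟫) =O[𝓝 x₀] fun y ↦ y - x₀ :=
    Asymptotics.IsBigO.of_bound ‖e‖ (.of_forall fun y ↦ norm_inner_le_norm _ _)
  have hcut : (fun y ↦ cuspCutoff β (‖y - x₀‖ ^ 2 / ρ ^ 2) - 1) =o[𝓝 x₀] fun _ ↦ (1 : ℝ) := by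
    have hcont : Continuous fun y ↦ cuspCutoff β (‖y - x₀‖ ^ 2 / ρ ^ 2) - 1 := by
      have := continuous_cuspCutoff hβ.le
      fun_prop
    rw [Asymptotics.isLittleO_one_iff]
    simpa [cuspCutoff_zero hβ.ne'] using hcont.tendsto x₀
  simpa [cuspBump, mul_sub] using hlin.norm_right.mul_isLittleO hcut

/-- At `x = x₀` the formula still holds, although there the derivative of the profile is a junk
value: it is multiplied by `0`. -/
theorem hasGradientAt_cuspBump (e x₀ : E) (hβ : 0 < β) (hρ : ρ ≠ 0) (x : E) :
    HasGradientAt (cuspBump e x₀ β ρ)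
      (cuspCutoff β (‖x - x₀‖ ^ 2 / ρ ^ 2) • e +
        (2 / ρ ^ 2 * ⟪e, x - x₀⟫ * deriv (cuspCutoff β) (‖x - x₀‖ ^ 2 / ρ ^ 2)) • (x - x₀)) x := by
  rcases eq_or_ne x x₀ with rfl | hx
  · simpa [cuspCutoff_zero hβ.ne'] using hasGradientAt_cuspBump_self e x hβ ρ
  have hs : 0 < ‖x - x₀‖ ^ 2 / ρ ^ 2 := by
    have : 0 < ‖x - x₀‖ := norm_pos_iff.2 (sub_ne_zero.2 hx)
    positivity
  have hsub : HasFDerivAt (fun y : E ↦ y - x₀) (.id ℝ E) x := (hasFDerivAt_id x).sub_const x₀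
  have hlin : HasFDerivAt (fun y ↦ ⟪e, y - x₀⟫) (innerSL ℝ e) x :=
    (innerSL ℝ e).hasFDerivAt.comp x hsub
  have hcut := (hasDerivAt_cuspCutoff β hs).differentiableAt.hasDerivAt.comp_hasFDerivAt x
    (hsub.norm_sq.mul_const (ρ ^ 2)⁻¹)
  rw [hasGradientAt_iff_hasFDerivAt]
  refine (hlin.mul hcut).congr_fderiv ?_
  ext y
  simp [div_eq_mul_inv]
  ring

theorem differentiable_cuspBump (e x₀ : E) (hβ : 0 < β) (hρ : ρ ≠ 0) :
    Differentiable ℝ (cuspBump e x₀ β ρ) :=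
  fun x ↦ (hasGradientAt_cuspBump e x₀ hβ hρ x).differentiableAt

theorem gradient_cuspBump_eq_zero (hβ : 0 < β) (hρ : 0 < ρ) (hx : x ∉ Metric.ball x₀ ρ) :
    ∇ (cuspBump e x₀ β ρ) x = 0 := by
  have hs := one_le_norm_sub_sq_div_sq hρ hx
  rw [(hasGradientAt_cuspBump e x₀ hβ hρ.ne' x).gradient, cuspCutoff_eq_zero hβ.le hs,
    deriv_cuspCutoff_eq_zero hβ.le hs, zero_smul, mul_zero, zero_smul, zero_add]

/- The exponent `β ≤ 1/2` makes the cusp `(‖x - x₀‖ / ρ) ^ (2 * β)` dominate the distance, and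
its logarithmic derivative `2 * β` makes it dominate the gradient of the cutoff. -/
theorem exists_gradient_cuspBump_eq_smul_add (e : E) (hβ : 0 < β) (hβ' : β ≤ 1 / 2) (hρ : 0 < ρ)
    (hx : x ∈ Metric.ball x₀ ρ) : ∃ t ∈ Icc (0 : ℝ) 1, ∃ η : E,
      ∇ (cuspBump e x₀ β ρ) x = t • e + η ∧
        ‖x - x₀‖ + ‖η‖ ≤ (ρ + 4 * β * ‖e‖) * (1 - t) := by
  have hdist := norm_sub_le_mul_rpow hβ.le hβ' hρ hx
  have hgrad := norm_smul_deriv_cuspCutoff_le e x₀ x hβ.le ρ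
  have hs₁ := norm_sub_sq_div_sq_le_one hρ hx
  set s := ‖x - x₀‖ ^ 2 / ρ ^ 2
  have hs : 0 ≤ s := by positivity
  have hcusp := rpow_le_one_sub_cuspCutoff hβ.le hs hs₁
  refine ⟨cuspCutoff β s, ⟨cuspCutoff_nonneg β s, by linarith [Real.rpow_nonneg hs β]⟩, _,
    (hasGradientAt_cuspBump e x₀ hβ hρ.ne' x).gradient, ?_⟩
  calc ‖x - x₀‖ + ‖(2 / ρ ^ 2 * ⟪e, x - x₀⟫ * deriv (cuspCutoff β) s) • (x - x₀)‖
      ≤ ρ * s ^ β + 4 * β * ‖e‖ * s ^ β := add_le_add hdist hgrad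
    _ = (ρ + 4 * β * ‖e‖) * s ^ β := by ring
    _ ≤ (ρ + 4 * β * ‖e‖) * (1 - cuspCutoff β s) := by gcongr

end CuspBump

section Correction

variable {E : Type*} [NormedAddCommGroup E] [InnerProductSpace ℝ E] {μ L : ℝ}

/- The room left for `t • g + (1 - t) • c • v₀`, where `c = (μ + L) / 2`, absorbs both the change
of residual from `v₀` to `v` and the error `η`. -/
theorem AdmissibleGradient.center_add_smul_sub_add {t : ℝ} {v v₀ g η : E}
    (h : AdmissibleGradient μ L 0 v₀ g) (hμ : 0 ≤ μ) (hL : 0 < L) (ht : t ∈ Icc (0 : ℝ) 1)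
    (hslack : (2 * L + 4 * μ + 1) * (‖v - v₀‖ + ‖η‖) ≤ (1 - t) * ((L - μ) / 2 * ‖v₀‖)) :
    AdmissibleGradient μ L 0 v
      (((μ + L) / 2) • v + (t • (g - ((μ + L) / 2) • v₀) + η)) := by
  set c := (μ + L) / 2
  have hmix := (h.smul_add_smul (center (by positivity) v₀) ht.1 (sub_nonneg.2 ht.2)
    (add_sub_cancel t 1)).add_perturbation (c • (v - v₀) + η)
  have hsplit : c • v + (t • (g - c • v₀) + η)
      = t • g + (1 - t) • c • v₀ + (c • (v - v₀) + η) := by module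
  have herr : ‖c • (v - v₀) + η‖ ≤ (μ + L) / 2 * ‖v - v₀‖ + ‖η‖ := by
    refine (norm_add_le _ _).trans_eq ?_
    rw [norm_smul, Real.norm_of_nonneg (by positivity)]
  rw [hsplit]
  refine hmix.change_residual hμ hL ?_
  have hrest : 0 ≤ (L + μ) / 2 * ‖v - v₀‖ + (2 * L + 4 * μ) * ‖η‖ := by positivity
  linarith [norm_nonneg (v - v₀)]

variable [CompleteSpace E]

theorem exists_local_correction {V : E → E} {x₀ g : E} {R : ℝ} (hμ : 0 < μ) (hμL : μ ≤ L)
    (hV : ∀ x, ‖V x - V x₀‖ ≤ ‖x - x₀‖) (hg : AdmissibleGradient μ L 0 (V x₀) g) (hR : 0 < R) :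
    ∃ h : E → ℝ, Differentiable ℝ h ∧
      (∀ x ∉ Metric.ball x₀ R, h x = 0 ∧ ∇ h x = 0) ∧
      h x₀ = 0 ∧ ∇ h x₀ = g - ((μ + L) / 2) • V x₀ ∧
      ∀ x, AdmissibleGradient μ L 0 (V x) (((μ + L) / 2) • V x + ∇ h x) := by
  have hL : 0 < L := hμ.trans_le hμL
  have hcenter (x : E) : AdmissibleGradient μ L 0 (V x) (((μ + L) / 2) • V x) :=
    AdmissibleGradient.center_of_le hμ.le hμL (V x)
  set e := g - ((μ + L) / 2) • V x₀
  rcases eq_or_ne e 0 with he | he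
  · exact ⟨fun _ ↦ 0, differentiable_const 0, by simp, rfl, by simp [he], by simpa using hcenter⟩
  have hroom := hg.center_margin_pos hμ.le hL.le (sub_ne_zero.1 he)
  set K := 2 * L + 4 * μ + 1
  set M := (L - μ) / 2 * ‖V x₀‖
  obtain ⟨δ, hδ, hδ_half, hδR, hδM⟩ :
      ∃ δ > 0, δ ≤ 1 / 2 ∧ δ ≤ R ∧ K * (δ + 4 * δ * ‖e‖) ≤ M := by
    refine ⟨min (min (1 / 2) R) (M / (K * (1 + 4 * ‖e‖))), by positivity,
      (min_le_left _ _).trans (min_le_left _ _), (min_le_left _ _).trans (min_le_right _ _), ?_⟩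
    have hmin := min_le_right (min (1 / 2) R) (M / (K * (1 + 4 * ‖e‖)))
    rw [le_div_iff₀ (by positivity)] at hmin
    linarith
  refine ⟨cuspBump e x₀ δ δ, differentiable_cuspBump e x₀ hδ hδ.ne', fun x hx ↦ ?_,
    cuspBump_self e x₀ δ δ, (hasGradientAt_cuspBump_self e x₀ hδ δ).gradient, fun x ↦ ?_⟩
  · have hx' := notMem_subset (Metric.ball_subset_ball hδR) hx
    exact ⟨cuspBump_eq_zero hδ.le hδ hx', gradient_cuspBump_eq_zero hδ hδ hx'⟩
  · by_cases hx : x ∈ Metric.ball x₀ δ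
    · obtain ⟨t, ht, η, hgrad, hη⟩ := exists_gradient_cuspBump_eq_smul_add e hδ hδ_half hδ hx
      rw [hgrad]
      refine hg.center_add_smul_sub_add hμ.le hL ht ?_
      have ht' : 0 ≤ 1 - t := sub_nonneg.2 ht.2
      calc K * (‖V x - V x₀‖ + ‖η‖) ≤ K * ((δ + 4 * δ * ‖e‖) * (1 - t)) := by
            gcongr
            exact (add_le_add_left (hV x) _).trans hη
        _ = (1 - t) * (K * (δ + 4 * δ * ‖e‖)) := by ring
        _ ≤ (1 - t) * M := by gcongr
    · rw [gradient_cuspBump_eq_zero hδ hδ hx, add_zero]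
      exact hcenter x

theorem exists_pairwise_disjoint_ball {ι α : Type*} [Finite ι] [MetricSpace α] {x : ι → α}
    (hx : Function.Injective x) :
    ∃ R > 0, Pairwise (Function.onFun Disjoint fun i ↦ Metric.ball (x i) R) := by
  have hpair (i j : ι) (hij : i ≠ j) :
      ∀ᶠ R in 𝓝[>] (0 : ℝ), Disjoint (Metric.ball (x i) R) (Metric.ball (x j) R) := by
    have hdist : 0 < dist (x i) (x j) / 2 := half_pos (dist_pos.2 (hx.ne hij))
    filter_upwards [Ioo_mem_nhdsGT hdist] with R hR
    exact Metric.ball_disjoint_ball (by linarith [hR.2])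
  have hall : ∀ᶠ R in 𝓝[>] (0 : ℝ), ∀ i j, i ≠ j →
      Disjoint (Metric.ball (x i) R) (Metric.ball (x j) R) := by
    simpa only [eventually_all] using hpair
  obtain ⟨R, hR, hR₀⟩ := (hall.and self_mem_nhdsWithin).exists
  exact ⟨R, hR₀, hR⟩

theorem sum_apply_eq_of_mem_of_pairwise_disjoint {ι α M : Type*} [Fintype ι] [AddCommMonoid M]
    {S : ι → Set α} (hS : Pairwise (Function.onFun Disjoint S)) {φ : ι → α → M}
    (hφ : ∀ i, ∀ y ∉ S i, φ i y = 0) {i : ι} {y : α} (hy : y ∈ S i) :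
    ∑ j, φ j y = φ i y :=
  Fintype.sum_eq_single i fun j hj ↦ hφ j y fun hyj ↦ (hS hj).le_bot ⟨hyj, hy⟩

theorem exists_correction {ι : Type*} [Finite ι] {V : E → E} {x g : ι → E} (hμ : 0 < μ)
    (hμL : μ ≤ L) (hV : ∀ x y, ‖V x - V y‖ ≤ ‖x - y‖) (hx : Function.Injective x)
    (hg : ∀ i, AdmissibleGradient μ L 0 (V (x i)) (g i)) :
    ∃ H : E → ℝ, Differentiable ℝ H ∧
      (∀ i, H (x i) = 0 ∧ ∇ H (x i) = g i - ((μ + L) / 2) • V (x i)) ∧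
      ∀ y, AdmissibleGradient μ L 0 (V y) (((μ + L) / 2) • V y + ∇ H y) := by
  have := Fintype.ofFinite ι
  obtain ⟨R, hR, hball⟩ := exists_pairwise_disjoint_ball hx
  choose h hdiff hout hval hgrad hadm using fun i ↦
    exists_local_correction hμ hμL (fun y ↦ hV y (x i)) (hg i) hR
  have hsum (y : E) : ∇ (fun z ↦ ∑ i, h i z) y = ∑ i, ∇ (h i) y :=
    gradient_fun_sum fun i _ ↦ hdiff i y
  have hsum_ball {i : ι} {y : E} (hy : y ∈ Metric.ball (x i) R) :
      ∑ j, h j y = h i y ∧ ∑ j, ∇ (h j) y = ∇ (h i) y :=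
    ⟨sum_apply_eq_of_mem_of_pairwise_disjoint hball (fun j z hz ↦ (hout j z hz).1) hy,
      sum_apply_eq_of_mem_of_pairwise_disjoint hball (fun j z hz ↦ (hout j z hz).2) hy⟩
  refine ⟨fun y ↦ ∑ i, h i y, .fun_sum fun i _ ↦ hdiff i, fun i ↦ ?_, fun y ↦ ?_⟩
  · obtain ⟨hval_sum, hgrad_sum⟩ := hsum_ball (Metric.mem_ball_self (x := x i) hR)
    exact ⟨hval_sum.trans (hval i), by rw [hsum, hgrad_sum, hgrad]⟩
  · rw [hsum]
    by_cases hy : ∃ i, y ∈ Metric.ball (x i) R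
    · obtain ⟨i, hi⟩ := hy
      rw [(hsum_ball hi).2]
      exact hadm i y
    · push Not at hy
      rw [Finset.sum_eq_zero fun i _ ↦ (hout i y (hy i)).2, add_zero]
      exact .center_of_le hμ.le hμL (V y)

end Correction

section Interpolation

variable {E ι : Type*} [NormedAddCommGroup E] [InnerProductSpace ℝ E] [CompleteSpace E] [Finite ι]
  {μ L : ℝ} {X : Set E} {p : E → E} {x g : ι → E} {fv : ι → ℝ}

theorem exists_inRSIEB_interpolant_of_le (hμ : 0 < μ) (hμL : μ ≤ L) (hX : Convex ℝ X)
    (hp : IsNearestPointMap p X) (hx : Function.Injective x)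
    (hg : ∀ i, AdmissibleGradient μ L 0 (x i - p (x i)) (g i)) :
    ∃ f : E → ℝ, InRSIEB μ L f ∧
      ∀ i, ∇ f (x i) = g i ∧ f (x i) = (μ + L) / 4 * ‖x i - p (x i)‖ ^ 2 := by
  obtain ⟨H, hH, hHx, hadm⟩ :=
    exists_correction (V := fun y ↦ y - p y) hμ hμL (hp.norm_sub_sub_le hX) hx hg
  have hgrad (y : E) : HasGradientAt (fun y ↦ (μ + L) / 4 * ‖y - p y‖ ^ 2 + H y)
      (((μ + L) / 2) • (y - p y) + ∇ H y) y := by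
    have hmain := hasGradientAt_const_mul ((μ + L) / 4) (hp.hasGradientAt_norm_sub_sq hX y)
    rw [smul_smul, show (μ + L) / 4 * 2 = (μ + L) / 2 by ring] at hmain
    exact hasGradientAt_add hmain (hH y).hasGradientAt
  refine ⟨_, hp.inRSIEB hX hμ (fun y ↦ (hgrad y).differentiableAt) fun y ↦ ?_, fun i ↦ ⟨?_, ?_⟩⟩
  · exact (hgrad y).gradient ▸ hadm y
  · rw [(hgrad (x i)).gradient, (hHx i).2, add_sub_cancel]
  · rw [(hHx i).1, add_zero]

theorem stmt_8_general (hμ : 0 < μ) (hX : Convex ℝ X) (hp : IsNearestPointMap p X)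
    (hx : Function.Injective x)
    (h : ∀ i, ‖g i‖ ≤ L * ‖x i - p (x i)‖ ∧
      μ * ‖x i - p (x i)‖ ^ 2 ≤ ⟪g i, x i - p (x i)⟫ ∧
      fv i = (μ + L) / 4 * ‖x i - p (x i)‖ ^ 2) :
    ∃ f : E → ℝ, InRSIEB μ L f ∧ ∀ i, ∇ f (x i) = g i ∧ f (x i) = fv i := by
  have hg (i : ι) : AdmissibleGradient μ L 0 (x i - p (x i)) (g i) :=
    AdmissibleGradient.zero_iff.2 ⟨(h i).1, (h i).2.1⟩
  rcases le_or_gt μ L with hμL | hLμ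
  · obtain ⟨f, hf, hfx⟩ := exists_inRSIEB_interpolant_of_le hμ hμL hX hp hx hg
    exact ⟨f, hf, fun i ↦ ⟨(hfx i).1, (hfx i).2.trans (h i).2.2.symm⟩⟩
  · have hres (i : ι) : x i - p (x i) = 0 := (hg i).residual_eq_zero_of_lt hLμ
    refine ⟨fun _ ↦ 0, inRSIEB_zero μ L, fun i ↦ ⟨?_, ?_⟩⟩
    · have hgi := hg i
      rw [hres i] at hgi
      rw [gradient_fun_const, hgi.eq_zero_of_residual_eq_zero]
    · rw [(h i).2.2, hres i, norm_zero]
      ring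

end Interpolation

/-- Sufficient interpolation conditions with function values for
`RSI⁻(μ) ∩ EB⁺(L)`. -/
theorem stmt_8 {d : ℕ} (hd : 1 ≤ d) (n : ℕ) (μ L : ℝ) (hμ : 0 < μ) (hL : 0 < L)
    (x : Fin (n + 1) → EuclideanSpace ℝ (Fin d))
    (fv : Fin (n + 1) → ℝ)
    (g : Fin (n + 1) → EuclideanSpace ℝ (Fin d))
    (hdist : Function.Injective x)
    (h : ∃ X : Set (EuclideanSpace ℝ (Fin d)), X.Nonempty ∧ IsClosed X ∧ Convex ℝ X ∧
      ∃ p, IsProjOn p X ∧ ∀ i,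
        ‖g i‖ ≤ L * ‖x i - p (x i)‖ ∧
        μ * ‖x i - p (x i)‖ ^ 2 ≤ ⟪g i, x i - p (x i)⟫ ∧
        fv i = (μ + L) / 4 * ‖x i - p (x i)‖ ^ 2) :
    ∃ f : EuclideanSpace ℝ (Fin d) → ℝ, MemRSIEB μ L f ∧
      ∀ i, gradient f (x i) = g i ∧ f (x i) = fv i := by
  obtain ⟨X, -, -, hX, p, hp, hdata⟩ := h
  exact stmt_8_general hμ hX hp hdist hdata
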